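/- Let D be a digraph on vertex type V, U a finite set of vertices enumerated by a duplicate-free list l, and D↑U the iterated detour of D over l. If x_0, x_1, …, x_k is a directed path in D (Adj_D x_i x_{i+1} for all i, with all vertices x_0, …, x_k distinct) such that x_0 ∉ U and x_k ∉ U, then the subsequence obtained by deleting from x_0, …, x_k all vertices belonging to U is a directed path in D↑U from x_0 to x_k. -/

import Mathlib

/-- The detour of a digraph (irreflexive relation) `A` at a vertex `v`. -/
def detour {V : Type*} (A : V → V → Prop) (v : V) : V → V → Prop :=
  fun x y => x ≠ v ∧ y ≠ v ∧ x ≠ y ∧ (A x y ∨ (A x v ∧ A v y))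

/-! Erasing a single vertex `v` from a path keeps every other arc. If `v` is interior, then its two
neighbours become adjacent in the detour at `v`, precisely because of the arcs of the path through
`v`. The shortened list is again a path, so the vertices of `U` can be removed one after another. -/

section ListFilter

variable {α : Type*} {p : α → Bool} {l : List α} {a : α}

theorem head?_filter_of_pos (h : l.head? = some a) (ha : p a) :
    (l.filter p).head? = some a := by
  obtain ⟨t, rfl⟩ := List.head?_eq_some_iff.1 h
  rw [List.filter_cons_of_pos ha, List.head?_cons]

theorem getLast?_filter_of_pos (h : l.getLast? = some a) (ha : p a) :
    (l.filter p).getLast? = some a := by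
  rw [List.getLast?_eq_head?_reverse] at h ⊢
  rw [← List.filter_reverse]
  exact head?_filter_of_pos h ha

end ListFilter

section Detour

variable {V : Type*} {A : V → V → Prop} {c : List V} {v : V}

theorem isChain_detour_of_notMem (hc : c.IsChain A) (hnodup : c.Nodup) (hv : v ∉ c) :
    c.IsChain (detour A v) := by
  have hne : c.IsChain (· ≠ ·) := hnodup.isChain
  refine List.isChain_iff_forall_rel_of_append_cons_cons.2 ?_
  rintro x y s t rfl
  have hadj : A x y := List.isChain_iff_forall_rel_of_append_cons_cons.1 hc rfl
  have hxy : x ≠ y := List.isChain_iff_forall_rel_of_append_cons_cons.1 hne rfl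
  exact ⟨ne_of_mem_of_not_mem (by simp) hv, ne_of_mem_of_not_mem (by simp) hv, hxy, .inl hadj⟩

theorem isChain_detour_append {s t : List V} (hc : (s ++ v :: t).IsChain A)
    (hnodup : (s ++ v :: t).Nodup) : (s ++ t).IsChain (detour A v) := by
  obtain ⟨hv, hst⟩ := List.nodup_cons.1 (List.nodup_middle.1 hnodup)
  obtain ⟨hvs, hvt⟩ : v ∉ s ∧ v ∉ t := by simpa only [List.mem_append, not_or] using hv
  obtain ⟨hs, ht, hdisj⟩ := List.nodup_append.1 hst
  obtain ⟨hcs, hcvt, hxv⟩ := List.isChain_append.1 hc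
  obtain ⟨hvy, hct⟩ := List.isChain_cons.1 hcvt
  refine (isChain_detour_of_notMem hcs hs hvs).append (isChain_detour_of_notMem hct ht hvt) ?_
  intro x hx y hy
  have hxs : x ∈ s := List.mem_of_mem_getLast? hx
  have hyt : y ∈ t := List.mem_of_mem_head? hy
  exact ⟨ne_of_mem_of_not_mem hxs hvs, ne_of_mem_of_not_mem hyt hvt, hdisj x hxs y hyt,
    .inr ⟨hxv x hx v rfl, hvy y hy⟩⟩

variable [DecidableEq V]

theorem isChain_detour_erase (hc : c.IsChain A) (hnodup : c.Nodup) (v : V) :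
    (c.erase v).IsChain (detour A v) := by
  by_cases hv : v ∈ c
  · obtain ⟨s, t, -, rfl, herase⟩ := List.exists_erase_eq hv
    rw [herase]
    exact isChain_detour_append hc hnodup
  · rw [List.erase_of_not_mem hv]
    exact isChain_detour_of_notMem hc hnodup hv

theorem isChain_foldl_detour_diff (hc : c.IsChain A) (hnodup : c.Nodup) (l : List V) :
    (c.diff l).IsChain (l.foldl detour A) := by
  induction l generalizing A c with
  | nil => exact hc
  | cons v l ih =>
    rw [List.diff_cons, List.foldl_cons]
    exact ih (isChain_detour_erase hc hnodup v) (hnodup.erase v)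

end Detour

/-- Given a directed path `x_0, …, x_k` in `D` (recorded as a duplicate-free list `c`
whose consecutive entries are arcs of `D`) with `x_0, x_k ∉ U`, the subsequence
obtained by deleting all vertices belonging to `U` is a directed path in the iterated
detour `D↑U` from `x_0` to `x_k`. -/
theorem detour_path_deletion {V : Type*} [DecidableEq V]
    (A : V → V → Prop) (hA : Irreflexive A)
    (U : Finset V) (l : List V) (hl : l.Nodup) (hmem : ∀ x, x ∈ l ↔ x ∈ U)
    (c : List V) (hchain : c.Chain' A) (hnodup : c.Nodup)
    (x0 xk : V) (hhead : c.head? = some x0) (hlast : c.getLast? = some xk)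
    (hx0 : x0 ∉ U) (hxk : xk ∉ U) :
    (c.filter (fun x => decide (x ∉ U))).Chain' (List.foldl detour A l) ∧
      (c.filter (fun x => decide (x ∉ U))).head? = some x0 ∧
      (c.filter (fun x => decide (x ∉ U))).getLast? = some xk := by
  have hfilter : c.filter (fun x => decide (x ∉ U)) = c.diff l := by
    simp only [hnodup.sdiff_eq_filter, hmem]
  refine ⟨?_, head?_filter_of_pos hhead (decide_eq_true hx0),
    getLast?_filter_of_pos hlast (decide_eq_true hxk)⟩
  rw [hfilter]
  exact isChain_foldl_detour_diff hchain hnodup l
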